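/- arXiv:math/0609260 — 6 statements merged into one kernel-verified Lean document; each statement's English description precedes it below -/
import Mathlib

section
/- Let F be a finite field of odd cardinality q, let ε ∈ F be a nonsquare and let v ∈ F be nonzero. Let X be the 2×2 matrix over F with rows (0, v) and (εv, 0). Then the orbit of X under the conjugation action of SL(2,F) (the group of 2×2 matrices over F of determinant 1) is exactly the set of all 2×2 matrices A over F with trace A = 0 and det A = −εv². -/
/-- Let `F` be a finite field of odd cardinality, `ε ∈ F` a nonsquare and `v ∈ F` nonzero.
Let `X = !![0, v; ε·v, 0]`.  Then the conjugation orbit of `X` under `SL(2,F)` is exactly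
the set of `2×2` matrices `A` over `F` with `trace A = 0` and `det A = −ε·v²`. -/
theorem stmt1 (F : Type*) [Field F] [Fintype F] (hq : Odd (Fintype.card F))
    (ε v : F) (hε0 : ε ≠ 0) (hε : ¬ IsSquare ε) (hv : v ≠ 0) :
    {A : Matrix (Fin 2) (Fin 2) F |
        ∃ g : Matrix.SpecialLinearGroup (Fin 2) F,
          A = (g : Matrix (Fin 2) (Fin 2) F) * !![0, v; ε * v, 0] *
              ((g⁻¹ : Matrix.SpecialLinearGroup (Fin 2) F) : Matrix (Fin 2) (Fin 2) F)} =
      {A : Matrix (Fin 2) (Fin 2) F | A.trace = 0 ∧ A.det = -(ε * v ^ 2)} := by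
  classical
  ext A
  simp only [Set.mem_setOf_eq]
  constructor
  · rintro ⟨g, rfl⟩
    constructor
    · rw [Matrix.trace_mul_comm, ← Matrix.mul_assoc, ← Matrix.SpecialLinearGroup.coe_mul]
      simp [Matrix.trace_fin_two]
    · rw [Matrix.det_mul, Matrix.det_mul, Matrix.SpecialLinearGroup.det_coe,
        Matrix.SpecialLinearGroup.det_coe, Matrix.det_fin_two_of]
      ring
  · rintro ⟨ht, hd⟩
    obtain ⟨a, b, c, d, rfl⟩ : ∃ a b c d, A = !![a, b; c, d] :=
      ⟨_, _, _, _, Matrix.eta_fin_two A⟩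
    rw [Matrix.trace_fin_two_of] at ht
    rw [Matrix.det_fin_two_of] at hd
    obtain rfl : d = -a := by linear_combination ht
    have hb : b ≠ 0 := by
      rintro rfl
      apply hε
      refine ⟨a / v, ?_⟩
      field_simp
      linear_combination hd
    obtain ⟨p, r, hpr⟩ : ∃ p r : F, p ^ 2 - ε * r ^ 2 = b / v := by
      obtain ⟨p, r, h⟩ := FiniteField.exists_root_sum_quadratic
        (f := (Polynomial.X ^ 2 - Polynomial.C (b / v) : Polynomial F))
        (g := (Polynomial.C (-ε) * Polynomial.X ^ 2 : Polynomial F))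
        (Polynomial.degree_X_pow_sub_C (by decide) _)
        (Polynomial.degree_C_mul_X_pow 2 (neg_ne_zero.mpr hε0))
        (Nat.odd_iff.mp hq)
      refine ⟨p, r, ?_⟩
      simp at h
      linear_combination h
    have hpr' : v * (p ^ 2 - ε * r ^ 2) = b := by rw [hpr]; field_simp
    have hdet : p * ((v * p - a * r) / b) - r * ((ε * v * r - a * p) / b) = 1 := by
      field_simp
      linear_combination hpr'
    refine ⟨⟨!![p, r; (ε * v * r - a * p) / b, (v * p - a * r) / b], ?_⟩, ?_⟩
    · rw [Matrix.det_fin_two_of]; exact hdet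
    · have key : !![a, b; c, -a] * !![p, r; (ε * v * r - a * p) / b, (v * p - a * r) / b] =
          !![p, r; (ε * v * r - a * p) / b, (v * p - a * r) / b] * !![0, v; ε * v, 0] := by
        ext i j
        fin_cases i <;> fin_cases j <;> simp [Matrix.mul_apply, Fin.sum_univ_two] <;>
          field_simp
        · ring
        · ring
        · linear_combination (-p) * hd
        · linear_combination (-r) * hd
      set g : Matrix.SpecialLinearGroup (Fin 2) F :=
        ⟨!![p, r; (ε * v * r - a * p) / b, (v * p - a * r) / b], by
          rw [Matrix.det_fin_two_of]; exact hdet⟩ with hg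
      change !![a, b; c, -a] * (g : Matrix (Fin 2) (Fin 2) F) =
        (g : Matrix (Fin 2) (Fin 2) F) * !![0, v; ε * v, 0] at key
      rw [← key, Matrix.mul_assoc, ← Matrix.SpecialLinearGroup.coe_mul]
      simp
end

section
/- Let F be a finite field of odd cardinality q and let ε ∈ F be a nonsquare. Then the number of quadruples (a, b, c, d) ∈ F⁴ with a·d − b·c = 1 such that d² − ε·b² is a nonzero square in F equals q(q² − 1)/2, i.e. exactly half of the elements of SL(2,F) satisfy this condition. (This is the Frobenius-point count underlying Lemma 'unram.elements' of the paper, which asserts the corresponding motivic volume is ½·L(L−1)(L+1).) -/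
theorem aux_norm_ne {F : Type*} [Field F] (ε : F) (hε : ¬ IsSquare ε) (d b : F)
    (h : d ^ 2 - ε * b ^ 2 = 0) : d = 0 ∧ b = 0 := by
  by_cases hb : b = 0
  · subst hb
    simpa using h
  · exfalso
    apply hε
    refine ⟨d / b, ?_⟩
    field_simp
    linear_combination -h

open Polynomial in
theorem aux_exists {F : Type*} [Field F] [Fintype F] (hq : Odd (Fintype.card F))
    (ε : F) (hε0 : ε ≠ 0) : ∃ u v : F, u ^ 2 - ε * v ^ 2 = ε := by
  have h1 : (X ^ 2 - C ε : F[X]).degree = 2 := degree_X_pow_sub_C (by norm_num) ε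
  have h2 : (C (-ε) * X ^ 2 : F[X]).degree = 2 :=
    degree_C_mul_X_pow 2 (neg_ne_zero.mpr hε0)
  obtain ⟨a, b, h⟩ := FiniteField.exists_root_sum_quadratic h1 h2 (Nat.odd_iff.mp hq)
  refine ⟨a, b, ?_⟩
  simp at h
  linear_combination h

theorem aux_count {F : Type*} [Field F] [Fintype F] [DecidableEq F]
    (hq : Odd (Fintype.card F))
    (ε : F) (hε0 : ε ≠ 0) (hε : ¬ IsSquare ε) :
    2 * (Finset.univ.filter
      (fun p : F × F => quadraticChar F (p.2 ^ 2 - ε * p.1 ^ 2) = 1)).card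
      = Fintype.card F ^ 2 - 1 := by
  have h2 : ringChar F ≠ 2 := by
    intro h
    have := FiniteField.even_card_of_char_two h
    rw [Nat.odd_iff] at hq
    omega
  have hχ : quadraticChar F ε = -1 := quadraticChar_neg_one_iff_not_isSquare.mpr hε
  obtain ⟨u, v, huv⟩ := aux_exists hq ε hε0
  let f : F × F → F × F := fun p => (u * p.1 + v * p.2, u * p.2 + ε * v * p.1)
  have hf : Function.Injective f := by
    rintro ⟨b, d⟩ ⟨b', d'⟩ h
    simp only [f, Prod.mk.injEq] at h
    obtain ⟨h1, h3⟩ := h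
    refine Prod.ext ?_ ?_
    · apply mul_left_cancel₀ hε0
      linear_combination u * h1 - v * h3 - (b - b') * huv
    · apply mul_left_cancel₀ hε0
      linear_combination u * h3 - ε * v * h1 - (d - d') * huv
  have hN : ∀ p : F × F, quadraticChar F ((f p).2 ^ 2 - ε * (f p).1 ^ 2)
      = - quadraticChar F (p.2 ^ 2 - ε * p.1 ^ 2) := by
    intro p
    have : (f p).2 ^ 2 - ε * (f p).1 ^ 2 = ε * (p.2 ^ 2 - ε * p.1 ^ 2) := by
      simp only [f]
      linear_combination (p.2 ^ 2 - ε * p.1 ^ 2) * huv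
    rw [this, map_mul, hχ]
    ring
  set S := Finset.univ.filter
      (fun p : F × F => quadraticChar F (p.2 ^ 2 - ε * p.1 ^ 2) = 1) with hS
  set T := Finset.univ.filter
      (fun p : F × F => quadraticChar F (p.2 ^ 2 - ε * p.1 ^ 2) = -1) with hT
  have hST : S.card ≤ T.card := by
    apply Finset.card_le_card_of_injOn f _ hf.injOn
    intro p hp
    simp only [hS, hT, Finset.coe_filter, Finset.mem_univ, true_and, Set.mem_setOf_eq] at hp ⊢
    rw [hN, hp]
  have hTS : T.card ≤ S.card := by
    apply Finset.card_le_card_of_injOn f _ hf.injOn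
    intro p hp
    simp only [hS, hT, Finset.coe_filter, Finset.mem_univ, true_and, Set.mem_setOf_eq] at hp ⊢
    rw [hN, hp]
    norm_num
  have hd : Disjoint S T := by
    rw [Finset.disjoint_left]
    intro p hp hp'
    simp only [hS, hT, Finset.mem_filter, Finset.mem_univ, true_and] at hp hp'
    rw [hp] at hp'
    norm_num at hp'
  have hU : S ∪ T = Finset.univ.erase (0 : F × F) := by
    ext p
    simp only [hS, hT, Finset.mem_union, Finset.mem_filter, Finset.mem_univ, true_and,
      Finset.mem_erase, and_true]
    constructor
    · rintro h rfl
      simp at h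
    · intro h
      apply quadraticChar_dichotomy
      intro h0
      obtain ⟨h3, h4⟩ := aux_norm_ne ε hε _ _ h0
      exact h (Prod.ext h4 h3)
  have hc := Finset.card_union_of_disjoint hd
  rw [hU, Finset.card_erase_of_mem (Finset.mem_univ _), Finset.card_univ,
    Fintype.card_prod] at hc
  rw [pow_two]
  omega

/-- Let `F` be a finite field of odd cardinality `q` and `ε ∈ F` a nonsquare.  The number of
quadruples `(a,b,c,d) ∈ F⁴` with `a·d − b·c = 1` such that `d² − ε·b²` is a nonzero square
equals `q·(q² − 1)/2`, i.e. exactly half of the elements of `SL(2,F)`. -/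
theorem stmt2 (F : Type*) [Field F] [Fintype F] (hq : Odd (Fintype.card F))
    (ε : F) (hε0 : ε ≠ 0) (hε : ¬ IsSquare ε) :
    Nat.card {t : F × F × F × F //
        t.1 * t.2.2.2 - t.2.1 * t.2.2.1 = 1 ∧
        ∃ x : F, x ≠ 0 ∧ t.2.2.2 ^ 2 - ε * t.2.1 ^ 2 = x ^ 2} =
      Fintype.card F * (Fintype.card F ^ 2 - 1) / 2 := by
  classical
  have key := aux_count hq ε hε0 hε
  have hiff : ∀ y : F, quadraticChar F y = 1 ↔ ∃ x : F, x ≠ 0 ∧ y = x ^ 2 := by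
    intro y
    constructor
    · intro h
      have hy : y ≠ 0 := by
        rintro rfl
        simp at h
      obtain ⟨x, hx⟩ := (quadraticChar_one_iff_isSquare hy).mp h
      refine ⟨x, ?_, by rw [hx, pow_two]⟩
      rintro rfl
      simp at hx
      exact hy hx
    · rintro ⟨x, hx, rfl⟩
      exact quadraticChar_sq_one' hx
  have hne : ∀ y : F, (∃ x : F, x ≠ 0 ∧ y = x ^ 2) → y ≠ 0 := by
    rintro y ⟨x, hx, rfl⟩
    exact pow_ne_zero 2 hx
  let e : {t : F × F × F × F //
        t.1 * t.2.2.2 - t.2.1 * t.2.2.1 = 1 ∧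
        ∃ x : F, x ≠ 0 ∧ t.2.2.2 ^ 2 - ε * t.2.1 ^ 2 = x ^ 2} ≃
      F × {p : F × F // quadraticChar F (p.2 ^ 2 - ε * p.1 ^ 2) = 1} :=
    { toFun := fun t => ((t.1.2.2.2 * t.1.2.2.1 - ε * t.1.2.1 * t.1.1) /
          (t.1.2.2.2 ^ 2 - ε * t.1.2.1 ^ 2), ⟨(t.1.2.1, t.1.2.2.2), (hiff _).mpr t.2.2⟩)
      invFun := fun z => ⟨(z.2.1.2 / (z.2.1.2 ^ 2 - ε * z.2.1.1 ^ 2) + z.2.1.1 * z.1, z.2.1.1,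
          ε * z.2.1.1 / (z.2.1.2 ^ 2 - ε * z.2.1.1 ^ 2) + z.2.1.2 * z.1, z.2.1.2), by
        obtain ⟨s, ⟨b, d⟩, h⟩ := z
        have h0 := (hiff _).mp h
        have h1 := hne _ h0
        refine ⟨?_, h0⟩
        dsimp only at h1 ⊢
        field_simp
        ring⟩
      left_inv := by
        rintro ⟨⟨a, b, c, d⟩, h, h0⟩
        have h1 := hne _ h0
        dsimp only at h h1
        simp only [Subtype.mk.injEq, Prod.mk.injEq, true_and, and_true]
        constructor
        · field_simp
          linear_combination (-d) * h
        · field_simp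
          linear_combination (-ε * b) * h
      right_inv := by
        rintro ⟨s, ⟨b, d⟩, h⟩
        have h1 := hne _ ((hiff _).mp h)
        dsimp only at h1
        simp only [Prod.mk.injEq, and_true]
        field_simp
        ring }
  rw [Nat.card_congr e, Nat.card_prod, Nat.card_eq_fintype_card, Nat.card_eq_fintype_card,
    Fintype.card_subtype, ← key, Nat.mul_left_comm, Nat.mul_div_cancel_left _ (by norm_num)]
end

section
/- Let p be a prime, let G = SL(2,ℚ_p), let K = SL(2,ℤ_p), and for an integer λ let a_λ ∈ G be the diagonal matrix diag(p^λ, p^(−λ)). For every integer λ ≥ 1, the set of left cosets gK of K in G that are contained in the double coset K·a_λ·K is finite, and its cardinality equals (p + 1)·p^(2λ−1). -/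
/-- The diagonal matrix `diag(p^λ, p^(−λ))` as an element of `SL(2, ℚ_p)`. -/
noncomputable def aSL (p : ℕ) [Fact p.Prime] (lam : ℤ) :
    Matrix.SpecialLinearGroup (Fin 2) ℚ_[p] :=
  ⟨!![(p : ℚ_[p]) ^ lam, 0; 0, (p : ℚ_[p]) ^ (-lam)], by
    have hp : (p : ℚ_[p]) ≠ 0 := by
      exact_mod_cast (Fact.out : p.Prime).ne_zero
    simp [Matrix.det_fin_two_of, zpow_neg]
    exact mul_inv_cancel₀ (zpow_ne_zero _ hp)⟩

/-- The maximal compact subgroup `K = SL(2, ℤ_p)`, viewed as the set of elements of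
`SL(2, ℚ_p)` all of whose entries lie in `ℤ_p` (i.e. have norm at most `1`). -/
def Kset (p : ℕ) [Fact p.Prime] : Set (Matrix.SpecialLinearGroup (Fin 2) ℚ_[p]) :=
  {g | ∀ i j : Fin 2, ‖(g : Matrix (Fin 2) (Fin 2) ℚ_[p]) i j‖ ≤ 1}

/-- The set of left cosets `gK` of `K` in `G = SL(2, ℚ_p)` that are contained in the
double coset `K·a_λ·K`. -/
def cosetsIn (p : ℕ) [Fact p.Prime] (lam : ℤ) :
    Set (Set (Matrix.SpecialLinearGroup (Fin 2) ℚ_[p])) :=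
  {C | (∃ g : Matrix.SpecialLinearGroup (Fin 2) ℚ_[p], C = {h | ∃ k ∈ Kset p, h = g * k}) ∧
    C ⊆ {h | ∃ k₁ ∈ Kset p, ∃ k₂ ∈ Kset p, h = k₁ * aSL p lam * k₂}}

open Matrix in
theorem aux_one (p : ℕ) [Fact p.Prime] : (1 : SpecialLinearGroup (Fin 2) ℚ_[p]) ∈ Kset p := by
  intro i j
  fin_cases i <;> fin_cases j <;> simp

theorem aux_add {p : ℕ} [Fact p.Prime] {a b : ℚ_[p]} {r : ℝ} (ha : ‖a‖ ≤ r) (hb : ‖b‖ ≤ r) :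
    ‖a + b‖ ≤ r := (Padic.nonarchimedean a b).trans (max_le ha hb)

theorem aux_sub {p : ℕ} [Fact p.Prime] {a b : ℚ_[p]} {r : ℝ} (ha : ‖a‖ ≤ r) (hb : ‖b‖ ≤ r) :
    ‖a - b‖ ≤ r := by
  rw [sub_eq_add_neg]; exact aux_add ha (by rwa [norm_neg])

theorem aux_mul1 {p : ℕ} [Fact p.Prime] {a b : ℚ_[p]} (ha : ‖a‖ ≤ 1) (hb : ‖b‖ ≤ 1) :
    ‖a * b‖ ≤ 1 := by
  rw [norm_mul]; exact mul_le_one₀ ha (norm_nonneg _) hb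

theorem aux_mul {p : ℕ} [Fact p.Prime] {g h : Matrix.SpecialLinearGroup (Fin 2) ℚ_[p]}
    (hg : g ∈ Kset p) (hh : h ∈ Kset p) : g * h ∈ Kset p := by
  intro i j
  rw [Matrix.SpecialLinearGroup.coe_mul, Matrix.mul_apply, Fin.sum_univ_two]
  exact aux_add (aux_mul1 (hg _ _) (hh _ _)) (aux_mul1 (hg _ _) (hh _ _))

theorem aux_inv {p : ℕ} [Fact p.Prime] {g : Matrix.SpecialLinearGroup (Fin 2) ℚ_[p]}
    (hg : g ∈ Kset p) : g⁻¹ ∈ Kset p := by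
  intro i j
  rw [Matrix.SpecialLinearGroup.coe_inv, Matrix.adjugate_fin_two]
  have h00 := hg 0 0
  have h01 := hg 0 1
  have h10 := hg 1 0
  have h11 := hg 1 1
  fin_cases i <;> fin_cases j <;> simpa

def auxCos (p : ℕ) [Fact p.Prime] (g : Matrix.SpecialLinearGroup (Fin 2) ℚ_[p]) :
    Set (Matrix.SpecialLinearGroup (Fin 2) ℚ_[p]) := {h | ∃ k ∈ Kset p, h = g * k}

theorem auxCos_eq {p : ℕ} [Fact p.Prime] (g h : Matrix.SpecialLinearGroup (Fin 2) ℚ_[p]) :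
    auxCos p g = auxCos p h ↔ g⁻¹ * h ∈ Kset p := by
  constructor
  · intro e
    have : h ∈ auxCos p g := by rw [e]; exact ⟨1, aux_one p, by simp⟩
    obtain ⟨k, hk, rfl⟩ := this
    simpa using hk
  · intro e
    ext x
    constructor
    · rintro ⟨k, hk, rfl⟩
      exact ⟨(g⁻¹ * h)⁻¹ * k, aux_mul (aux_inv e) hk, by group⟩
    · rintro ⟨k, hk, rfl⟩
      exact ⟨(g⁻¹ * h) * k, aux_mul e hk, by group⟩

theorem aux_key {p : ℕ} [Fact p.Prime] (lam : ℕ)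
    (k l : Matrix.SpecialLinearGroup (Fin 2) ℚ_[p]) (hk : k ∈ Kset p) (hl : l ∈ Kset p) :
    auxCos p (k * aSL p lam) = auxCos p (l * aSL p lam) ↔
      ‖k.1 1 1 * l.1 0 1 - k.1 0 1 * l.1 1 1‖ ≤ (p : ℝ) ^ (-(2 * lam : ℕ) : ℤ) := by
  have hp0 : (p : ℚ_[p]) ≠ 0 := by exact_mod_cast (Fact.out : p.Prime).ne_zero
  have hpR : (0 : ℝ) < p := by exact_mod_cast (Fact.out : p.Prime).pos
  have hm : k⁻¹ * l ∈ Kset p := aux_mul (aux_inv hk) hl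
  have e01 : (k⁻¹ * l).1 0 1 = k.1 1 1 * l.1 0 1 - k.1 0 1 * l.1 1 1 := by
    change ((k⁻¹ * l : Matrix.SpecialLinearGroup (Fin 2) ℚ_[p]) : Matrix (Fin 2) (Fin 2) ℚ_[p]) 0 1 = _
    rw [Matrix.SpecialLinearGroup.coe_mul, Matrix.SpecialLinearGroup.coe_inv,
      Matrix.adjugate_fin_two, Matrix.mul_apply, Fin.sum_univ_two]
    simp; ring
  rw [auxCos_eq, ← e01]
  have : (k * aSL p lam)⁻¹ * (l * aSL p lam) = (aSL p lam)⁻¹ * (k⁻¹ * l) * aSL p lam := by group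
  rw [this]
  generalize k⁻¹ * l = m at hm
  have hM : ((aSL p lam)⁻¹ * m * aSL p lam).1 =
      !![m.1 0 0, (p : ℚ_[p]) ^ (-(2 * lam : ℕ) : ℤ) * m.1 0 1;
         (p : ℚ_[p]) ^ (2 * lam : ℕ) * m.1 1 0, m.1 1 1] := by
    change (((aSL p lam)⁻¹ * m * aSL p lam : Matrix.SpecialLinearGroup (Fin 2) ℚ_[p]) :
      Matrix (Fin 2) (Fin 2) ℚ_[p]) = _
    rw [Matrix.SpecialLinearGroup.coe_mul, Matrix.SpecialLinearGroup.coe_mul,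
      Matrix.SpecialLinearGroup.coe_inv, Matrix.adjugate_fin_two]
    ext i j
    have e : (p : ℚ_[p]) ^ (2 * (lam : ℤ)) = ((p : ℚ_[p]) ^ lam) ^ 2 := by
      rw [mul_comm, zpow_mul, zpow_natCast]; norm_cast
    fin_cases i <;> fin_cases j <;>
      simp [aSL, Matrix.mul_apply, Matrix.vecMul, dotProduct, Fin.sum_univ_two] <;> field_simp
    · rw [e]; ring
    · ring
  have h01 : ‖(p : ℚ_[p]) ^ (-(2 * lam : ℕ) : ℤ) * m.1 0 1‖ ≤ 1 ↔
      ‖m.1 0 1‖ ≤ (p : ℝ) ^ (-(2 * lam : ℕ) : ℤ) := by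
    rw [norm_mul, Padic.norm_p_zpow, neg_neg, zpow_neg, zpow_natCast, mul_comm,
      ← le_div_iff₀ (by positivity), one_div]
  rw [← h01]
  constructor
  · intro h
    have := h 0 1
    rw [hM] at this
    simpa using this
  · intro h i j
    rw [hM]
    fin_cases i <;> fin_cases j
    · exact hm 0 0
    · exact h
    · change ‖(p : ℚ_[p]) ^ (2 * lam : ℕ) * m.1 1 0‖ ≤ 1
      refine aux_mul1 ?_ (hm 1 0)
      rw [norm_pow]
      exact pow_le_one₀ (norm_nonneg _) (Padic.norm_int_le_one (p := p) (p : ℤ))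
    · exact hm 1 1

theorem aux_approx {p : ℕ} [Fact p.Prime] (n : ℕ) (z : ℚ_[p]) (hz : ‖z‖ ≤ 1) :
    ∃ x : Fin (p ^ n), ‖((x : ℕ) : ℚ_[p]) - z‖ ≤ (p : ℝ) ^ (-(n : ℕ) : ℤ) := by
  let w : ℤ_[p] := ⟨z, hz⟩
  refine ⟨⟨w.appr n, w.appr_lt n⟩, ?_⟩
  have := (PadicInt.norm_le_pow_iff_mem_span_pow _ _).2 (PadicInt.appr_spec n w)
  rw [← norm_neg, neg_sub]
  rw [PadicInt.norm_def, PadicInt.coe_sub, PadicInt.coe_natCast] at this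
  exact this

theorem aux_natdist {p : ℕ} [Fact p.Prime] (n : ℕ) (x y : Fin (p ^ n))
    (h : ‖((x : ℕ) : ℚ_[p]) - ((y : ℕ) : ℚ_[p])‖ ≤ (p : ℝ) ^ (-(n : ℕ) : ℤ)) : x = y := by
  have h' : ‖(((x : ℕ) - (y : ℕ) : ℤ) : ℚ_[p])‖ ≤ (p : ℝ) ^ (-(n : ℕ) : ℤ) := by
    push_cast; exact h
  rw [Padic.norm_int_le_pow_iff_dvd] at h'
  have hx := x.2
  have hy := y.2
  have : ((x : ℕ) : ℤ) ≡ (y : ℕ) [ZMOD ((p ^ n : ℕ) : ℤ)] := (Int.modEq_iff_dvd.2 (by exact_mod_cast h')).symm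
  exact Fin.ext (Nat.ModEq.eq_of_lt_of_lt (Int.natCast_modEq_iff.1 this) hx hy)

noncomputable def auxF (p : ℕ) [Fact p.Prime] (n : ℕ) :
    Fin (p ^ n) ⊕ Fin (p ^ (n - 1)) → Matrix.SpecialLinearGroup (Fin 2) ℚ_[p]
  | .inl x => ⟨!![1, ((x : ℕ) : ℚ_[p]); 0, 1], by simp [Matrix.det_fin_two_of]⟩
  | .inr y => ⟨!![0, 1; -1, (p : ℚ_[p]) * ((y : ℕ) : ℚ_[p])], by simp [Matrix.det_fin_two_of]⟩

theorem aux_nat (p : ℕ) [Fact p.Prime] (m : ℕ) : ‖(m : ℚ_[p])‖ ≤ 1 := by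
  exact_mod_cast Padic.norm_int_le_one (p := p) (m : ℤ)

theorem auxF_mem (p : ℕ) [Fact p.Prime] (n : ℕ) (s) : auxF p n s ∈ Kset p := by
  intro i j
  rcases s with x | y
  · have := aux_nat p x
    fin_cases i <;> fin_cases j <;> simp [auxF, this]
  · have := aux_mul1 (aux_nat p p) (aux_nat p y)
    rw [norm_mul] at this
    fin_cases i <;> fin_cases j <;> simp [auxF]
    simpa using this

theorem aux_pmul {p : ℕ} [Fact p.Prime] (n : ℕ) (hn : 1 ≤ n) (z : ℚ_[p]) :
    ‖(p : ℚ_[p]) * z‖ ≤ (p : ℝ) ^ (-(n : ℕ) : ℤ) ↔ ‖z‖ ≤ (p : ℝ) ^ (-((n - 1 : ℕ)) : ℤ) := by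
  have hpR : (0 : ℝ) < p := by exact_mod_cast (Fact.out : p.Prime).pos
  obtain ⟨m, rfl⟩ : ∃ m, n = m + 1 := ⟨n - 1, by omega⟩
  rw [norm_mul, Padic.norm_p, inv_mul_le_iff₀ hpR]
  have : (p : ℝ) * (p : ℝ) ^ (-((m + 1 : ℕ)) : ℤ) = (p : ℝ) ^ (-((m + 1 - 1 : ℕ)) : ℤ) := by
    rw [← zpow_one_add₀ hpR.ne']; congr 1; push_cast; simp
  rw [this]

theorem aux_cross {p : ℕ} [Fact p.Prime] (n : ℕ) (hn : 1 ≤ n) (x y : ℕ) 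
    (h : ‖(1 : ℚ_[p]) - (p : ℚ_[p]) * ((x : ℚ_[p]) * y)‖ ≤ (p : ℝ) ^ (-(n : ℕ) : ℤ)) : False := by
  have h' : ‖((1 - p * (x * y) : ℤ) : ℚ_[p])‖ ≤ (p : ℝ) ^ (-(n : ℕ) : ℤ) := by
    push_cast; exact h
  rw [Padic.norm_int_le_pow_iff_dvd] at h'
  have h1 : (p : ℤ) ∣ 1 - p * (x * y) := (dvd_pow_self (p : ℤ) (n := n) (by omega)).trans (by exact_mod_cast h')
  have h2 : (p : ℤ) ∣ 1 := (dvd_sub_left (dvd_mul_right _ _)).1 h1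
  exact (Fact.out : p.Prime).one_lt.ne' (by exact_mod_cast Int.eq_one_of_dvd_one (by positivity) h2)

theorem aux_bij (p : ℕ) [Fact p.Prime] (lam : ℕ) (hlam : 1 ≤ lam) :
    Set.BijOn (fun s => auxCos p (auxF p (2 * lam) s * aSL p lam)) Set.univ
      (cosetsIn p (lam : ℤ)) := by
  have hp0 : (p : ℚ_[p]) ≠ 0 := by exact_mod_cast (Fact.out : p.Prime).ne_zero
  have hpR : (0 : ℝ) < p := by exact_mod_cast (Fact.out : p.Prime).pos
  refine ⟨?_, ?_, ?_⟩
  · intro s _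
    refine ⟨⟨_, rfl⟩, ?_⟩
    rintro _ ⟨k, hk, rfl⟩
    exact ⟨_, auxF_mem p _ s, k, hk, rfl⟩
  · intro s _ t _ h
    have h := (aux_key lam _ _ (auxF_mem p _ s) (auxF_mem p _ t)).1 h
    rcases s with x | x <;> rcases t with y | y
    · simp only [auxF, Matrix.of_apply, Matrix.cons_val', Matrix.cons_val_zero, Matrix.cons_val_one,
        Matrix.cons_val_fin_one, one_mul, mul_one] at h
      rw [aux_natdist _ _ _ h]
    · simp only [auxF, Matrix.of_apply, Matrix.cons_val', Matrix.cons_val_zero, Matrix.cons_val_one,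
        Matrix.cons_val_fin_one, one_mul, mul_one] at h
      refine (aux_cross (p := p) (2 * lam) (by omega) x y ?_).elim
      convert h using 2
      ring
    · simp only [auxF, Matrix.of_apply, Matrix.cons_val', Matrix.cons_val_zero, Matrix.cons_val_one,
        Matrix.cons_val_fin_one, one_mul, mul_one] at h
      refine (aux_cross (p := p) (2 * lam) (by omega) x y ?_).elim
      rw [norm_sub_rev]
      rw [mul_assoc] at h
      exact h
    · simp only [auxF, Matrix.of_apply, Matrix.cons_val', Matrix.cons_val_zero, Matrix.cons_val_one,
        Matrix.cons_val_fin_one, one_mul, mul_one] at h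
      rw [← mul_sub, aux_pmul _ (by omega)] at h
      rw [aux_natdist _ _ _ h]
  · rintro C ⟨⟨g, rfl⟩, hC⟩
    obtain ⟨k, hk, k2, hk2, hg⟩ := hC ⟨1, aux_one p, (mul_one g).symm⟩
    have hCg : auxCos p g = auxCos p (k * aSL p lam) := by
      rw [auxCos_eq, hg]
      convert aux_inv hk2 using 1
      group
    have hdet : k.1 0 0 * k.1 1 1 - k.1 0 1 * k.1 1 0 = 1 := by
      rw [← Matrix.det_fin_two]; exact k.2
    have main : ∃ s, auxCos p (k * aSL p lam) = auxCos p (auxF p (2 * lam) s * aSL p lam) := by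
      by_cases hd : ‖k.1 1 1‖ = 1
      · have hd0 : k.1 1 1 ≠ 0 := by intro h; simp [h] at hd
        obtain ⟨x, hx⟩ := aux_approx (p := p) (2 * lam) (k.1 0 1 / k.1 1 1)
          (by rw [norm_div, hd, div_one]; exact hk 0 1)
        refine ⟨.inl x, (aux_key lam _ _ hk (auxF_mem p _ _)).2 ?_⟩
        simp only [auxF, Matrix.of_apply, Matrix.cons_val', Matrix.cons_val_zero,
          Matrix.cons_val_one, Matrix.cons_val_fin_one, one_mul, mul_one]
        have : k.1 1 1 * ((x : ℕ) : ℚ_[p]) - k.1 0 1 =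
          k.1 1 1 * (((x : ℕ) : ℚ_[p]) - k.1 0 1 / k.1 1 1) := by field_simp
        rw [this, norm_mul, hd, one_mul]
        exact hx
      · have hd1 : ‖k.1 1 1‖ < 1 := lt_of_le_of_ne (hk 1 1) hd
        have hb : ‖k.1 0 1‖ = 1 := by
          refine le_antisymm (hk 0 1) ?_
          by_contra hlt
          push Not at hlt
          have h1 : ‖k.1 0 0 * k.1 1 1‖ < 1 := by
            rw [norm_mul]; exact mul_lt_one_of_nonneg_of_lt_one_right (hk 0 0) (norm_nonneg _) hd1
          have h2 : ‖-(k.1 0 1 * k.1 1 0)‖ < 1 := by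
            rw [norm_neg, norm_mul]
            exact mul_lt_one_of_nonneg_of_lt_one_left (norm_nonneg _) hlt (hk 1 0)
          have := (Padic.nonarchimedean (k.1 0 0 * k.1 1 1) (-(k.1 0 1 * k.1 1 0))).trans_lt
            (max_lt h1 h2)
          rw [← sub_eq_add_neg, hdet, norm_one] at this
          exact lt_irrefl _ this
        have hb0 : k.1 0 1 ≠ 0 := by intro h; simp [h] at hb
        have hq : ‖k.1 1 1 / k.1 0 1 / p‖ ≤ 1 := by
          obtain ⟨w, hw⟩ : ∃ w : ℤ_[p], (w : ℚ_[p]) = k.1 1 1 := ⟨⟨k.1 1 1, hk 1 1⟩, rfl⟩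
          have h1 : ‖w‖ < 1 := by rw [PadicInt.norm_def, hw]; exact hd1
          rw [PadicInt.norm_lt_one_iff_dvd] at h1
          obtain ⟨c, hc⟩ := h1
          have hc' : k.1 1 1 = (p : ℚ_[p]) * c := by
            have := congrArg (fun z : ℤ_[p] => (z : ℚ_[p])) hc
            simpa [hw] using this
          rw [hc', norm_div, norm_div, norm_mul, hb, div_one, mul_div_assoc, mul_comm,
            div_mul_cancel₀ _ (norm_ne_zero_iff.2 hp0)]
          exact PadicInt.norm_le_one c
        obtain ⟨x, hx⟩ := aux_approx (p := p) (2 * lam - 1) _ hq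
        refine ⟨.inr x, (aux_key lam _ _ hk (auxF_mem p _ _)).2 ?_⟩
        simp only [auxF, Matrix.of_apply, Matrix.cons_val', Matrix.cons_val_zero,
          Matrix.cons_val_one, Matrix.cons_val_fin_one, one_mul, mul_one]
        have : k.1 1 1 - k.1 0 1 * ((p : ℚ_[p]) * ((x : ℕ) : ℚ_[p])) =
          - (k.1 0 1 * ((p : ℚ_[p]) * (((x : ℕ) : ℚ_[p]) - k.1 1 1 / k.1 0 1 / p))) := by
          field_simp; ring
        rw [this, norm_neg, norm_mul, hb, one_mul, aux_pmul _ (by omega)]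
        exact hx
    obtain ⟨s, hs⟩ := main
    exact ⟨s, trivial, (hCg.trans hs).symm⟩

theorem stmt6 (p : ℕ) [Fact p.Prime] (lam : ℕ) (hlam : 1 ≤ lam) :
    (cosetsIn p (lam : ℤ)).Finite ∧
      Nat.card (cosetsIn p (lam : ℤ)) = (p + 1) * p ^ (2 * lam - 1) := by
  have hb := aux_bij p lam hlam
  refine ⟨hb.finite_iff_finite.1 Set.finite_univ, ?_⟩
  rw [← Nat.card_congr (hb.equiv _), Nat.card_congr (Equiv.Set.univ _), Nat.card_sum,
    Nat.card_fin, Nat.card_fin]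
  obtain ⟨m, hm⟩ : ∃ m, 2 * lam = m + 1 := ⟨2 * lam - 1, by omega⟩
  rw [hm, Nat.add_sub_cancel]
  ring
end

section
/- Let p be an odd prime. Call a 2×2 matrix Y over ℚ_p with trace 0 topologically nilpotent if Yⁿ → 0 as n → ∞, and call g ∈ SL(2,ℚ_p) topologically unipotent if g^(pⁿ) → 1 as n → ∞. Then for every topologically nilpotent trace-zero matrix Y the matrix 1 − Y/2 is invertible, the modified Cayley transform cay(Y) = (1 + Y/2)·(1 − Y/2)⁻¹ has determinant 1 and is topologically unipotent, and Y ↦ cay(Y) is a bijection from the set of topologically nilpotent trace-zero 2×2 matrices over ℚ_p onto the set of topologically unipotent elements of SL(2,ℚ_p). -/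
/-- A trace-zero `2×2` matrix `Y` over `ℚ_p` is topologically nilpotent
if `Yⁿ → 0` as `n → ∞` (entrywise convergence). -/
def TopNilp (p : ℕ) [Fact p.Prime] (Y : Matrix (Fin 2) (Fin 2) ℚ_[p]) : Prop :=
  Filter.Tendsto (fun n : ℕ => Y ^ n) Filter.atTop (nhds 0)

/-- A matrix `g` (of determinant 1) over `ℚ_p` is topologically unipotent
if `g^(pⁿ) → 1` as `n → ∞` (entrywise convergence). -/
def TopUnip (p : ℕ) [Fact p.Prime] (g : Matrix (Fin 2) (Fin 2) ℚ_[p]) : Prop :=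
  Filter.Tendsto (fun n : ℕ => g ^ (p ^ n)) Filter.atTop (nhds 1)

/-- The modified Cayley transform `cay(Y) = (1 + Y/2)·(1 − Y/2)⁻¹`. -/
noncomputable def cay (p : ℕ) [Fact p.Prime] (Y : Matrix (Fin 2) (Fin 2) ℚ_[p]) :
    Matrix (Fin 2) (Fin 2) ℚ_[p] :=
  (1 + (2 : ℚ_[p])⁻¹ • Y) * (1 - (2 : ℚ_[p])⁻¹ • Y)⁻¹

abbrev M2 (p : ℕ) [Fact p.Prime] := Matrix (Fin 2) (Fin 2) ℚ_[p]

lemma sq_tr0 {p : ℕ} [Fact p.Prime] (X : M2 p) (h : X.trace = 0) : X * X = (-X.det) • (1 : M2 p) := by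
  rw [Matrix.trace_fin_two] at h
  have h1 : X 1 1 = - X 0 0 := by linear_combination h
  ext i j
  fin_cases i <;> fin_cases j <;> simp [Matrix.mul_apply, Matrix.det_fin_two, h1] <;> ring

noncomputable def cc {p : ℕ} [Fact p.Prime] (e : ℚ_[p]) (X : M2 p) : M2 p :=
  (1 - e)⁻¹ • ((1 + e) • (1 : M2 p) + (2 : ℚ_[p]) • X)

lemma one_sub_ne {p : ℕ} [Fact p.Prime] {e : ℚ_[p]} (he : ‖e‖ < 1) : 1 - e ≠ 0 := by
  intro h
  have : e = 1 := by linear_combination -h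
  rw [this] at he
  simp at he

lemma mul_cc {p : ℕ} [Fact p.Prime] {e : ℚ_[p]} {X : M2 p} (hX : X * X = e • (1 : M2 p)) :
    (1 - X) * (1 + X) = (1 - e) • (1 : M2 p) := by
  have : (1 - X) * (1 + X) = 1 - X * X := by noncomm_ring
  rw [this, hX, sub_smul, one_smul]

lemma inv_eq {p : ℕ} [Fact p.Prime] {e : ℚ_[p]} {X : M2 p} (he : ‖e‖ < 1)
    (hX : X * X = e • (1 : M2 p)) : (1 - X) * ((1 - e)⁻¹ • (1 + X)) = 1 := by
  rw [mul_smul_comm, mul_cc hX, smul_smul, inv_mul_cancel₀ (one_sub_ne he), one_smul]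

lemma cc_eq {p : ℕ} [Fact p.Prime] {e : ℚ_[p]} {X : M2 p}
    (hX : X * X = e • (1 : M2 p)) : cc e X = (1 - e)⁻¹ • ((1 + X) * (1 + X)) := by
  have : (1 + X) * (1 + X) = 1 + (2 : ℚ_[p]) • X + X * X := by rw [two_smul]; noncomm_ring
  rw [cc, this, hX]
  congr 1
  module

lemma cay_eq {p : ℕ} [Fact p.Prime] {e : ℚ_[p]} {Y : M2 p} (he : ‖e‖ < 1)
    (hX : ((2 : ℚ_[p])⁻¹ • Y) * ((2 : ℚ_[p])⁻¹ • Y) = e • (1 : M2 p)) :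
    cay p Y = cc e ((2 : ℚ_[p])⁻¹ • Y) := by
  rw [cay, Matrix.inv_eq_right_inv (inv_eq he hX), cc_eq hX, mul_smul_comm]

lemma pow_form {p : ℕ} [Fact p.Prime] {e : ℚ_[p]} (he : ‖e‖ < 1) (m : ℕ) :
    ∃ A B : ℚ_[p], ‖A - 1‖ ≤ ‖e‖ ∧ ‖B - m‖ ≤ ‖e‖ ∧ ∀ X : M2 p, X * X = e • (1 : M2 p) →
      (1 + X) ^ m = A • (1 : M2 p) + B • X := by
  induction m with
  | zero => exact ⟨1, 0, by simp, by simp, by simp⟩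
  | succ m ih =>
    obtain ⟨A, B, hA, hB, h⟩ := ih
    have hB1 : ‖B‖ ≤ 1 := by
      have : B = (B - m) + m := by ring
      rw [this]
      refine (Padic.nonarchimedean _ _).trans (max_le (hB.trans he.le) ?_)
      exact_mod_cast Padic.norm_int_le_one (p := p) m
    refine ⟨A + B * e, A + B, ?_, ?_, ?_⟩
    · have : A + B * e - 1 = (A - 1) + B * e := by ring
      rw [this]
      refine (Padic.nonarchimedean _ _).trans (max_le hA ?_)
      rw [norm_mul]
      exact mul_le_of_le_one_left (norm_nonneg _) hB1
    · have : A + B - (m + 1 : ℕ) = (A - 1) + (B - m) := by push_cast; ring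
      rw [this]
      exact (Padic.nonarchimedean _ _).trans (max_le hA hB)
    · intro X hX
      rw [pow_succ, h X hX]
      have : (A • (1 : M2 p) + B • X) * (1 + X) = A • (1 : M2 p) + (A + B) • X + B • (X * X) := by
        simp only [add_mul, mul_add, smul_mul_assoc, one_mul, mul_one]
        module
      rw [this, hX]
      module

lemma norm_one_of {p : ℕ} [Fact p.Prime] {A : ℚ_[p]} (h : ‖A - 1‖ < 1) : ‖A‖ = 1 := by
  have : A = (A - 1) + 1 := by ring
  rw [this, Padic.add_eq_max_of_ne (by rw [norm_one]; exact h.ne), norm_one]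
  exact max_eq_right h.le

lemma step {p : ℕ} [Fact p.Prime] {e : ℚ_[p]} (he : ‖e‖ < 1) {r : ℝ} (h1 : ‖e‖ ≤ r)
    (h2 : ‖(p : ℚ_[p])‖ ≤ r) :
    ∃ b : ℚ_[p], ‖b‖ ≤ r ∧ ∀ X : M2 p, X * X = e • (1 : M2 p) →
      cc e X ^ p = cc (b * b * e) (b • X) := by
  obtain ⟨A, B, hA, hB, h⟩ := pow_form he p
  have hA1 := norm_one_of (hA.trans_lt he)
  have hA0 : A ≠ 0 := by rintro rfl; simp at hA1
  refine ⟨B / A, ?_, ?_⟩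
  · rw [norm_div, hA1, div_one]
    have : B = (B - p) + p := by ring
    rw [this]
    exact (Padic.nonarchimedean _ _).trans (max_le (hB.trans h1) h2)
  · intro X hX
    have hbX : ((B / A) • X) * ((B / A) • X) = (B / A * (B / A) * e) • (1 : M2 p) := by
      rw [smul_mul_smul_comm, hX, smul_smul]
    have h1 := h X hX
    have h2 := h (-X) (by simpa using hX)
    have hc : Commute (1 + -X) (1 + X) := by
      show _ * _ = _ * _
      noncomm_ring
    have h3 : (1 - e) ^ p = A * A - B * B * e := by
      have h4 := mul_cc hX
      rw [sub_eq_add_neg] at h4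
      have h5 := hc.mul_pow p
      rw [h4, h1, h2, smul_pow, one_pow] at h5
      have : (A • (1 : M2 p) + B • -X) * (A • (1 : M2 p) + B • X)
          = (A * A) • (1 : M2 p) - (B * B) • (X * X) := by
        simp only [add_mul, mul_add, smul_mul_assoc, one_mul, mul_one, mul_smul_comm, neg_mul, smul_neg]
        module
      rw [this, hX] at h5
      have := congrFun (congrFun h5 0) 0
      simpa [mul_assoc] using this
    rw [cc_eq hX, cc_eq hbX, smul_pow, (Commute.refl (1 + X)).mul_pow, h1]
    have h6 : A • (1 : M2 p) + B • X = A • (1 + (B / A) • X) := by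
      rw [smul_add, smul_smul, mul_div_cancel₀ _ hA0]
    rw [h6, smul_mul_smul_comm, smul_smul, inv_pow, h3]
    congr 1
    have : A * A - B * B * e = A * A * (1 - B / A * (B / A) * e) := by field_simp
    rw [this, mul_inv]
    field_simp

lemma iter {p : ℕ} [Fact p.Prime] {e : ℚ_[p]} (he : ‖e‖ < 1) {r : ℝ} (h1 : ‖e‖ ≤ r)
    (h2 : ‖(p : ℚ_[p])‖ ≤ r) (hr : r < 1) (X : M2 p) (hX : X * X = e • (1 : M2 p)) (n : ℕ) :
    ∃ b : ℚ_[p], ‖b‖ ≤ r ^ n ∧ cc e X ^ (p ^ n) = cc (b * b * e) (b • X) := by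
  have hr0 : 0 ≤ r := (norm_nonneg _).trans h1
  induction n with
  | zero => exact ⟨1, by simp, by simp⟩
  | succ n ih =>
    obtain ⟨b, hb, h⟩ := ih
    have hb1 : ‖b‖ ≤ 1 := hb.trans (pow_le_one₀ hr0 hr.le)
    have hbe : ‖b * b * e‖ ≤ ‖e‖ := by
      rw [norm_mul, norm_mul]
      exact mul_le_of_le_one_left (norm_nonneg _) (mul_le_one₀ hb1 (norm_nonneg _) hb1)
    obtain ⟨c, hc, hh⟩ := step (hbe.trans_lt he) (hbe.trans h1) h2
    refine ⟨c * b, ?_, ?_⟩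
    · rw [norm_mul, pow_succ, mul_comm]
      exact mul_le_mul hb hc (norm_nonneg _) (pow_nonneg hr0 _)
    · rw [pow_succ, pow_mul, h, hh _ (by rw [smul_mul_smul_comm, hX, smul_smul]), smul_smul]
      congr 1
      ring

lemma cc_unip {p : ℕ} [Fact p.Prime] {e : ℚ_[p]} (he : ‖e‖ < 1) (X : M2 p)
    (hX : X * X = e • (1 : M2 p)) : TopUnip p (cc e X) := by
  have hp1 : ‖(p : ℚ_[p])‖ < 1 := Padic.norm_p_lt_one
  have hr : max ‖e‖ ‖(p : ℚ_[p])‖ < 1 := max_lt he hp1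
  choose b hb h using iter he (le_max_left ‖e‖ ‖(p : ℚ_[p])‖) (le_max_right _ _) hr X hX
  have hb0 : Filter.Tendsto b Filter.atTop (nhds 0) :=
    squeeze_zero_norm hb (tendsto_pow_atTop_nhds_zero_of_lt_one
      ((norm_nonneg _).trans (le_max_left _ _)) hr)
  unfold TopUnip
  simp_rw [h]
  have hb2 : Filter.Tendsto (fun n => b n * b n * e) Filter.atTop (nhds 0) := by
    simpa using (hb0.mul hb0).mul_const e
  have e1 : Filter.Tendsto (fun n => (1 - b n * b n * e)⁻¹) Filter.atTop (nhds 1) := by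
    have := (hb2.const_sub 1).inv₀ (by simp)
    simpa using this
  have e2 : Filter.Tendsto (fun n => (1 + b n * b n * e) • (1 : M2 p)) Filter.atTop (nhds 1) := by
    have := (hb2.const_add 1).smul_const (1 : M2 p)
    simpa using this
  have e3 : Filter.Tendsto (fun n => (2 : ℚ_[p]) • (b n • X)) Filter.atTop (nhds 0) := by
    have := (hb0.smul_const X).const_smul (2 : ℚ_[p])
    simpa using this
  have := e1.smul (e2.add e3)
  simpa [cc] using this

lemma nilp_iff {p : ℕ} [Fact p.Prime] {d : ℚ_[p]} {Y : M2 p} (hY : Y * Y = d • (1 : M2 p)) :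
    TopNilp p Y ↔ ‖d‖ < 1 := by
  have hev : ∀ n, Y ^ (2 * n) = d ^ n • (1 : M2 p) := by
    intro n
    rw [pow_mul, pow_two, hY, smul_pow, one_pow]
  constructor
  · intro h
    have h1 : Filter.Tendsto (fun n : ℕ => Y ^ (2 * n)) Filter.atTop (nhds 0) :=
      h.comp (Filter.tendsto_id.const_mul_atTop' (by norm_num))
    simp_rw [hev] at h1
    have h2 := ((continuous_apply_apply (0 : Fin 2) (0 : Fin 2)).tendsto (0 : M2 p)).comp h1
    have h3 : Filter.Tendsto (fun n : ℕ => d ^ n) Filter.atTop (nhds 0) := by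
      refine h2.congr fun n => ?_
      show (d ^ n • (1 : M2 p)) 0 0 = d ^ n
      simp
    exact tendsto_pow_atTop_nhds_zero_iff_norm_lt_one.1 h3
  · intro h
    have h0 : Filter.Tendsto (fun n : ℕ => d ^ (n / 2)) Filter.atTop (nhds 0) :=
      (tendsto_pow_atTop_nhds_zero_of_norm_lt_one h).comp
        (Nat.tendsto_div_const_atTop (by norm_num))
    have h1 := h0.smul_const (1 : M2 p)
    have h2 := h0.smul_const Y
    rw [zero_smul] at h1 h2
    have := h1.if' (p := fun n => n % 2 = 0) h2
    refine this.congr fun n => ?_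
    have hn := Nat.div_add_mod n 2
    split_ifs with hh
    · conv_rhs => rw [← hn, hh, add_zero, hev]
    · have hh' : n % 2 = 1 := by omega
      conv_rhs => rw [← hn, hh', pow_succ, hev, smul_mul_assoc, one_mul]

lemma norm_two {p : ℕ} [Fact p.Prime] (hp : Odd p) : ‖(2 : ℚ_[p])‖ = 1 := by
  have : ‖((2 : ℕ) : ℚ_[p])‖ = 1 := by
    rw [Padic.norm_natCast_eq_one_iff]
    exact (Nat.coprime_two_right).2 hp
  exact_mod_cast this

lemma tr_rec {p : ℕ} [Fact p.Prime] (g : M2 p) (hg : g.det = 1) (m : ℕ) :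
    (g ^ (m + 2)).trace = g.trace * (g ^ (m + 1)).trace - (g ^ m).trace := by
  have h : g * g = g.trace • g - 1 := by
    rw [Matrix.det_fin_two] at hg
    ext i j
    fin_cases i <;> fin_cases j <;>
      simp [Matrix.mul_apply, Matrix.trace_fin_two] <;> first | (ring1) | linear_combination -hg
  rw [pow_add, pow_two, h, mul_sub, mul_one, mul_smul_comm, ← pow_succ, Matrix.trace_sub,
    Matrix.trace_smul, smul_eq_mul]

lemma tr_dickson {p : ℕ} [Fact p.Prime] (g : M2 p) (hg : g.det = 1) (t : ℤ_[p])
    (ht : (t : ℚ_[p]) = g.trace) (m : ℕ) :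
    (((Polynomial.dickson 1 (1 : ℤ_[p]) m).eval t : ℤ_[p]) : ℚ_[p]) = (g ^ m).trace := by
  induction m using Nat.twoStepInduction with
  | zero =>
    simp only [Polynomial.dickson_zero, pow_zero, Matrix.trace_one]
    norm_num
    rfl
  | one => simp [ht]
  | more m h1 h2 =>
    rw [tr_rec g hg, Polynomial.dickson_add_two, ← h1, ← h2, ← ht]
    simp

lemma tr_grow {p : ℕ} [Fact p.Prime] (hp : Odd p) (g : M2 p) (hg : g.det = 1)
    (ht : 1 < ‖g.trace‖) (m : ℕ) : 1 ≤ ‖(g ^ m).trace‖ ∧ ‖(g ^ m).trace‖ < ‖(g ^ (m + 1)).trace‖ := by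
  induction m with
  | zero =>
    have : (1 : M2 p).trace = 2 := by simp [Matrix.trace_fin_two]
    simp only [pow_zero, zero_add, pow_one, this, norm_two hp]
    exact ⟨le_rfl, ht⟩
  | succ m ih =>
    obtain ⟨h1, h2⟩ := ih
    refine ⟨h1.trans h2.le, ?_⟩
    have h3 : ‖(g ^ (m + 1)).trace‖ < ‖g.trace * (g ^ (m + 1)).trace‖ := by
      rw [norm_mul]
      nlinarith
    rw [tr_rec g hg, sub_eq_add_neg, Padic.add_eq_max_of_ne]
    · exact lt_max_of_lt_left h3
    · rw [norm_neg]
      exact (h2.trans h3).ne'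

lemma descend {p : ℕ} [Fact p.Prime] (hp : Odd p) (g : M2 p) (hg : g.det = 1)
    (h : ‖(g ^ p).trace - 2‖ < 1) : ‖g.trace - 2‖ < 1 := by
  have ht : ‖g.trace‖ ≤ 1 := by
    by_contra! hc
    obtain ⟨k, hk⟩ : ∃ k, p = k + 1 := ⟨p - 1, by have := (Fact.out : p.Prime).pos; omega⟩
    have h1 := tr_grow hp g hg hc k
    rw [← hk] at h1
    have h2 : (g ^ p).trace = ((g ^ p).trace - 2) + 2 := by ring
    have h3 : ‖(g ^ p).trace‖ ≤ 1 := by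
      rw [h2]
      exact (Padic.nonarchimedean _ _).trans (max_le h.le (norm_two hp).le)
    linarith [h1.1, h1.2]
  set t : ℤ_[p] := ⟨g.trace, ht⟩ with ht_def
  have key : ∀ x : ℤ_[p], ‖(x : ℚ_[p]) - 2‖ < 1 ↔ PadicInt.toZMod x = 2 := by
    intro x
    have h1 : (x : ℚ_[p]) - 2 = ((x - 2 : ℤ_[p]) : ℚ_[p]) := by push_cast; rfl
    have h2 : PadicInt.toZMod x = 2 ↔ x - 2 ∈ RingHom.ker (PadicInt.toZMod (p := p)) := by
      rw [RingHom.mem_ker, map_sub, sub_eq_zero, map_ofNat]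
    rw [h1, h2, PadicInt.ker_toZMod, IsLocalRing.mem_maximalIdeal, PadicInt.mem_nonunits]
    rfl
  have h1 := tr_dickson g hg t rfl p
  rw [← h1, key] at h
  have h2 : PadicInt.toZMod t = 2 := by
    rw [← h, ← Polynomial.eval_map_apply, Polynomial.map_dickson, map_one,
      Polynomial.dickson_one_one_zmod_p]
    simp
  exact (key t).2 h2

lemma unip_tr {p : ℕ} [Fact p.Prime] (hp : Odd p) (g : M2 p) (hg : g.det = 1)
    (h : TopUnip p g) : ‖g.trace - 2‖ < 1 := by
  have h1 : Filter.Tendsto (fun n : ℕ => ‖(g ^ (p ^ n)).trace - 2‖) Filter.atTop (nhds 0) := by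
    have hc : Continuous fun A : M2 p => ‖A.trace - 2‖ :=
      ((continuous_id.matrix_trace).sub continuous_const).norm
    have := (hc.tendsto 1).comp h
    simpa [Matrix.trace_fin_two, Function.comp_def, one_add_one_eq_two] using this
  obtain ⟨n, hn⟩ := (h1.eventually (gt_mem_nhds one_pos)).exists
  clear h1
  induction n with
  | zero => simpa using hn
  | succ n ih =>
    apply ih
    apply descend hp _ (by simp [hg])
    rwa [← pow_mul, ← pow_succ]

lemma tr_cc {p : ℕ} [Fact p.Prime] {e : ℚ_[p]} (X : M2 p) (hX : X.trace = 0) :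
    (cc e X).trace = (1 - e)⁻¹ * (2 * (1 + e)) := by
  simp only [cc, Matrix.trace_smul, Matrix.trace_add, hX, Matrix.trace_one, smul_eq_mul,
    Fintype.card_fin]
  push_cast
  ring

lemma basic {p : ℕ} [Fact p.Prime] (hp : Odd p) (Y : M2 p) (h0 : Y.trace = 0) (hY : TopNilp p Y) :
    ∃ e : ℚ_[p], ‖e‖ < 1 ∧
      ((2 : ℚ_[p])⁻¹ • Y) * ((2 : ℚ_[p])⁻¹ • Y) = e • (1 : M2 p) := by
  have h1 := sq_tr0 Y h0
  refine ⟨2⁻¹ * 2⁻¹ * -Y.det, ?_, ?_⟩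
  · have := (nilp_iff h1).1 hY
    rw [norm_mul, norm_mul, norm_inv, norm_two hp]
    simpa using this
  · rw [smul_mul_smul_comm, h1, smul_smul]

theorem stmt9 (p : ℕ) [Fact p.Prime] (hp : Odd p) :
    (∀ Y : Matrix (Fin 2) (Fin 2) ℚ_[p], Y.trace = 0 → TopNilp p Y →
      IsUnit (1 - (2 : ℚ_[p])⁻¹ • Y) ∧ (cay p Y).det = 1 ∧ TopUnip p (cay p Y)) ∧
    Set.BijOn (cay p)
      {Y : Matrix (Fin 2) (Fin 2) ℚ_[p] | Y.trace = 0 ∧ TopNilp p Y}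
      {g : Matrix (Fin 2) (Fin 2) ℚ_[p] | g.det = 1 ∧ TopUnip p g} := by
  have main : ∀ Y : Matrix (Fin 2) (Fin 2) ℚ_[p], Y.trace = 0 → TopNilp p Y →
      IsUnit (1 - (2 : ℚ_[p])⁻¹ • Y) ∧ (cay p Y).det = 1 ∧ TopUnip p (cay p Y) := by
    intro Y h0 hY
    obtain ⟨e, he, hX⟩ := basic hp Y h0 hY
    have hu := inv_eq he hX
    have hdu : (1 - (2 : ℚ_[p])⁻¹ • Y).det ≠ 0 := by
      intro h
      have := congrArg Matrix.det hu
      rw [Matrix.det_mul, h] at this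
      simp at this
    refine ⟨(Matrix.isUnit_iff_isUnit_det _).2 (isUnit_iff_ne_zero.2 hdu), ?_, ?_⟩
    · rw [cay, Matrix.det_mul, Matrix.det_nonsing_inv, Ring.inverse_eq_inv']
      have : (1 + (2 : ℚ_[p])⁻¹ • Y).det = (1 - (2 : ℚ_[p])⁻¹ • Y).det := by
        rw [Matrix.trace_fin_two] at h0
        simp [Matrix.det_fin_two]
        linear_combination h0
      rw [this, mul_inv_cancel₀ hdu]
    · rw [cay_eq he hX]
      exact cc_unip he _ hX
  have h2 : (2 : ℚ_[p]) ≠ 0 := two_ne_zero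
  refine ⟨main, fun Y hY => (main Y hY.1 hY.2).2, ?_, ?_⟩
  · rintro Y ⟨h0, hY⟩ Z ⟨k0, hZ⟩ hYZ
    obtain ⟨e, he, hX⟩ := basic hp Y h0 hY
    obtain ⟨f, hf, hW⟩ := basic hp Z k0 hZ
    rw [cay_eq he hX, cay_eq hf hW] at hYZ
    have he1 := one_sub_ne he
    have hf1 := one_sub_ne hf
    have hef : e = f := by
      have := congrArg Matrix.trace hYZ
      rw [tr_cc _ (by rw [Matrix.trace_smul, h0, smul_zero]),
        tr_cc _ (by rw [Matrix.trace_smul, k0, smul_zero])] at this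
      field_simp at this
      have h3 : 2 * (e - f) = 0 := by linear_combination this
      have := (mul_eq_zero.1 h3).resolve_left h2
      linear_combination this
    subst hef
    have := smul_right_injective _ (inv_ne_zero he1) hYZ
    have := smul_right_injective _ h2 (add_left_cancel this)
    exact smul_right_injective _ (inv_ne_zero h2) this
  · rintro g ⟨hg, hgu⟩
    have ht := unip_tr hp g hg hgu
    set t := g.trace with ht_def
    have h4 : ‖(4 : ℚ_[p])‖ = 1 := by
      have : (4 : ℚ_[p]) = 2 * 2 := by norm_num
      rw [this, norm_mul, norm_two hp, one_mul]
    have ht2 : ‖t + 2‖ = 1 := by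
      have : t + 2 = (t - 2) + 4 := by ring
      rw [this, Padic.add_eq_max_of_ne (by rw [h4]; exact ht.ne), h4]
      exact max_eq_right ht.le
    have ht0 : t + 2 ≠ 0 := by intro h; rw [h] at ht2; simp at ht2
    set X : M2 p := (t + 2)⁻¹ • ((2 : ℚ_[p]) • g - t • (1 : M2 p)) with hXdef
    have hX0 : X.trace = 0 := by
      rw [hXdef, Matrix.trace_smul, Matrix.trace_sub, Matrix.trace_smul, Matrix.trace_smul, ← ht_def]
      simp
      right; ring
    have hdet : -X.det = (t - 2) / (t + 2) := by
      rw [Matrix.det_fin_two] at hg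
      rw [Matrix.trace_fin_two] at ht_def
      simp [hXdef, Matrix.det_fin_two]
      field_simp
      rw [ht_def]
      linear_combination (-4) * hg
    have hsq := sq_tr0 X hX0
    rw [hdet] at hsq
    have he : ‖(t - 2) / (t + 2)‖ < 1 := by rw [norm_div, ht2, div_one]; exact ht
    have hXX : (2 : ℚ_[p])⁻¹ • ((2 : ℚ_[p]) • X) = X := by
      rw [smul_smul, inv_mul_cancel₀ h2, one_smul]
    refine ⟨(2 : ℚ_[p]) • X, ⟨by rw [Matrix.trace_smul, hX0, smul_zero], ?_⟩, ?_⟩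
    · refine (nilp_iff (d := 2 * 2 * ((t - 2) / (t + 2))) ?_).2 ?_
      · rw [smul_mul_smul_comm, hsq, smul_smul]
      · rw [norm_mul, norm_mul, norm_two hp]
        simpa using he
    · rw [cay_eq (e := (t - 2) / (t + 2)) he (by rw [hXX, hsq]), hXX, cc]
      have he1 := one_sub_ne he
      rw [inv_smul_eq_iff₀ he1, hXdef]
      have a1 : 1 - (t - 2) / (t + 2) = 4 * (t + 2)⁻¹ := by field_simp; ring
      have a2 : 1 + (t - 2) / (t + 2) = 2 * t * (t + 2)⁻¹ := by field_simp; ring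
      rw [a1, a2]
      module
end

section
/- Let F be a finite field of odd cardinality q and let ε ∈ F be a nonsquare. Let u₁ be the 2×2 matrix with rows (1, 1) and (0, 1), and let u_ε be the matrix with rows (1, ε) and (0, 1). Then every g ∈ SL(2,F) with g ≠ 1 and (g − 1)² = 0 is conjugate in SL(2,F) to exactly one of u₁ and u_ε; in particular u₁ and u_ε are not conjugate in SL(2,F). (This is the classification of the nontrivial unipotent conjugacy classes U₁ and U_ε of SL(2,F) used throughout the paper.) -/
/-- The unipotent element `u₁ = !![1, 1; 0, 1]` of `SL(2,F)`. -/
def u1 (F : Type*) [Field F] : Matrix.SpecialLinearGroup (Fin 2) F :=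
  ⟨!![1, 1; 0, 1], by simp [Matrix.det_fin_two_of]⟩

/-- The unipotent element `u_ε = !![1, ε; 0, 1]` of `SL(2,F)`. -/
def ueps (F : Type*) [Field F] (ε : F) : Matrix.SpecialLinearGroup (Fin 2) F :=
  ⟨!![1, ε; 0, 1], by simp [Matrix.det_fin_two_of]⟩

theorem aux_conj {F : Type*} [Field F] (t : F) (g : Matrix.SpecialLinearGroup (Fin 2) F)
    (p q r s : F) (hd : p * s - q * r = 1)
    (h00 : g.1 0 0 = 1 - t * p * r) (h01 : g.1 0 1 = t * p ^ 2)
    (h10 : g.1 1 0 = - t * r ^ 2) (h11 : g.1 1 1 = 1 + t * p * r) :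
    IsConj (ueps F t) g := by
  rw [isConj_iff]
  obtain ⟨y, hy⟩ : ∃ y : Matrix.SpecialLinearGroup (Fin 2) F,
      (y : Matrix (Fin 2) (Fin 2) F) = !![p, q; r, s] :=
    ⟨⟨!![p, q; r, s], by rw [Matrix.det_fin_two_of]; exact hd⟩, rfl⟩
  have hu : (ueps F t : Matrix (Fin 2) (Fin 2) F) = !![1, t; 0, 1] := rfl
  have hg : (g : Matrix (Fin 2) (Fin 2) F) =
      !![1 - t * p * r, t * p ^ 2; - t * r ^ 2, 1 + t * p * r] := by
    rw [← h00, ← h01, ← h10, ← h11]; exact Matrix.eta_fin_two _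
  refine ⟨y, ?_⟩
  rw [mul_inv_eq_iff_eq_mul]
  apply Subtype.ext
  change (y : Matrix (Fin 2) (Fin 2) F) * (ueps F t : Matrix (Fin 2) (Fin 2) F) =
    (g : Matrix (Fin 2) (Fin 2) F) * (y : Matrix (Fin 2) (Fin 2) F)
  rw [hy, hu, hg, Matrix.mul_fin_two, Matrix.mul_fin_two]
  congr! 2 <;> grind

theorem aux_conj' {F : Type*} [Field F] (t : F) (g : Matrix.SpecialLinearGroup (Fin 2) F)
    (p r : F) (hpr : p ≠ 0 ∨ r ≠ 0)
    (h00 : g.1 0 0 = 1 - t * p * r) (h01 : g.1 0 1 = t * p ^ 2)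
    (h10 : g.1 1 0 = - t * r ^ 2) (h11 : g.1 1 1 = 1 + t * p * r) :
    IsConj (ueps F t) g := by
  rcases hpr with h | h
  · exact aux_conj t g p 0 r p⁻¹ (by field_simp; ring) h00 h01 h10 h11
  · exact aux_conj t g p (-r⁻¹) r 0 (by field_simp; ring) h00 h01 h10 h11

theorem aux_sq {F : Type*} [Field F] [Fintype F] (ε : F) (hε0 : ε ≠ 0) (hε : ¬ IsSquare ε)
    (b : F) (hb : b ≠ 0) : ∃ t, (t = 1 ∨ t = ε) ∧ ∃ p, p ≠ 0 ∧ b = t * p ^ 2 := by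
  classical
  have key : IsSquare b ∨ IsSquare (b * ε) := by
    by_contra! h
    have hF : ringChar F ≠ 2 := fun h2 => hε (FiniteField.isSquare_of_char_two h2 ε)
    have h1 := (quadraticChar_neg_one_iff_not_isSquare (F := F)).2 h.1
    have h2 := (quadraticChar_neg_one_iff_not_isSquare (F := F)).2 h.2
    have h3 := (quadraticChar_neg_one_iff_not_isSquare (F := F)).2 hε
    rw [map_mul, h1, h3] at h2
    norm_num at h2
  rcases key with ⟨p, hp⟩ | ⟨p, hp⟩
  · exact ⟨1, Or.inl rfl, p, by rintro rfl; simp at hp; exact hb hp, by rw [hp]; ring⟩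
  · refine ⟨ε, Or.inr rfl, p / ε, ?_, by field_simp; rw [hp]; ring⟩
    have : p ≠ 0 := by rintro rfl; simp at hp; tauto
    exact div_ne_zero this hε0

theorem aux_not {F : Type*} [Field F] (ε : F) (hε : ¬ IsSquare ε) :
    ¬ IsConj (u1 F) (ueps F ε) := by
  rw [isConj_iff]
  rintro ⟨y, hy⟩
  rw [mul_inv_eq_iff_eq_mul] at hy
  have hd : (y : Matrix (Fin 2) (Fin 2) F).det = 1 := y.2
  have hm : (y : Matrix (Fin 2) (Fin 2) F) * !![1, 1; 0, 1] =
    !![1, ε; 0, 1] * (y : Matrix (Fin 2) (Fin 2) F) := congrArg Subtype.val hy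
  generalize (y : Matrix (Fin 2) (Fin 2) F) = m at hd hm
  rw [Matrix.det_fin_two] at hd
  have e00 := congrFun (congrFun hm 0) 0
  have e01 := congrFun (congrFun hm 0) 1
  simp only [Matrix.mul_apply, Fin.sum_univ_two] at e00 e01
  simp at e00 e01
  have hε0 : ε ≠ 0 := by rintro rfl; exact hε ⟨0, by simp⟩
  apply hε
  refine ⟨m 0 0, ?_⟩
  grind

/-- Classification of the nontrivial unipotent conjugacy classes of `SL(2,F)`, `F` a finite
field of odd cardinality and `ε` a nonsquare:  every `g ∈ SL(2,F)` with `g ≠ 1` and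
`(g − 1)² = 0` is conjugate to exactly one of `u₁` and `u_ε`; in particular `u₁` and `u_ε`
are not conjugate in `SL(2,F)`. -/
theorem stmt11 (F : Type*) [Field F] [Fintype F] (hq : Odd (Fintype.card F))
    (ε : F) (hε0 : ε ≠ 0) (hε : ¬ IsSquare ε) :
    (∀ g : Matrix.SpecialLinearGroup (Fin 2) F, g ≠ 1 →
        ((g : Matrix (Fin 2) (Fin 2) F) - 1) ^ 2 = 0 →
        Xor' (IsConj (u1 F) g) (IsConj (ueps F ε) g)) ∧
      ¬ IsConj (u1 F) (ueps F ε) := by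
  have hn := aux_not ε hε
  refine ⟨fun g hg h => ?_, hn⟩
  have ex : ∃ t, (t = 1 ∨ t = ε) ∧ IsConj (ueps F t) g := by
    have hd := g.2
    rw [Matrix.det_fin_two] at hd
    have e := fun i j => congrArg (fun m : Matrix (Fin 2) (Fin 2) F => m i j) h
    have e00 := e 0 0
    have e01 := e 0 1
    have e10 := e 1 0
    have e11 := e 1 1
    simp [pow_two, Matrix.mul_apply, Fin.sum_univ_two] at e00 e01 e10 e11
    have hne : ¬ (g.1 0 0 = 1 ∧ g.1 0 1 = 0 ∧ g.1 1 0 = 0 ∧ g.1 1 1 = 1) := by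
      rintro ⟨h1, h2, h3, h4⟩
      apply hg
      ext i j
      fin_cases i <;> fin_cases j <;> simp [h1, h2, h3, h4]
    generalize ha : g.1 0 0 = a at *
    generalize hb : g.1 0 1 = b at *
    generalize hc : g.1 1 0 = c at *
    generalize hdd : g.1 1 1 = d at *
    by_cases hb0 : b = 0
    · subst hb0
      have ha1 : a = 1 := by grind
      have hd1 : d = 1 := by grind
      have hc0 : c ≠ 0 := by grind
      obtain ⟨t, ht, r, hr, h⟩ := aux_sq ε hε0 hε (-c) (neg_ne_zero.2 hc0)
      exact ⟨t, ht, aux_conj' t g 0 r (Or.inr hr) (by grind) (by grind) (by grind) (by grind)⟩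
    · obtain ⟨t, ht, p, hp, h⟩ := aux_sq ε hε0 hε b hb0
      have ht0 : t ≠ 0 := by rintro rfl; simp at h; exact hb0 h
      have htr : d = 2 - a := by grind
      obtain ⟨r, hr⟩ : ∃ r, t * p * r = 1 - a := ⟨(1 - a) / (t * p), by field_simp⟩
      refine ⟨t, ht, aux_conj' t g p r (Or.inl hp) (by grind) (by grind) ?_ (by grind)⟩
      rw [hc]
      apply mul_left_cancel₀ hb0
      have : b * c = -(t * p * r) ^ 2 := by rw [hr]; grind
      rw [this, h]; ring
  obtain ⟨t, rfl | rfl, hc⟩ := ex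
  · exact Or.inl ⟨hc, fun h2 => hn (IsConj.trans hc h2.symm)⟩
  · exact Or.inr ⟨hc, fun h2 => hn (IsConj.trans h2 hc.symm)⟩
end

section
/- Let F be a finite field of odd cardinality q, let χ be the quadratic character of F, let ψ : F → ℂ be a nontrivial additive character, let ε ∈ F be a nonsquare and v ∈ F nonzero. For c ∈ F nonzero and s ∈ {1, −1} let S(c, s) = {(x, y) ∈ F² : x·y = c and χ(x) = s}. Consider the alternating combination T(f) = Σ_{S(v²,χ(v))} f − Σ_{S(v²,χ(εv))} f + Σ_{S(εv²,χ(v))} f − Σ_{S(εv²,χ(εv))} f, where each sum is of f(x, y) over the indicated set. Then: (i) for every a ∈ F, T((x,y) ↦ ψ(y·a)) = 0; and (ii) for every b ∈ F, T((x,y) ↦ ψ(x·b)) = 2·χ(v)·χ(b)·Σ_{t ∈ F} χ(t)·ψ(t). (This is equation (eqn:hatvarphi01) of the paper for the function φ₍₀₎, in raw exponential-sum form.) -/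
open Finset

/-- The alternating combination `T(f) = Σ_{S(v²,χ(v))} f − Σ_{S(v²,χ(εv))} f
+ Σ_{S(εv²,χ(v))} f − Σ_{S(εv²,χ(εv))} f`, where
`S(c,s) = {(x,y) ∈ F² : x·y = c ∧ χ(x) = s}`. -/
noncomputable def Tsum0 {F : Type*} [Field F] [Fintype F] [DecidableEq F]
    (χ : F → ℤ) (ε v : F) (f : F → F → ℂ) : ℂ :=
    (∑ t ∈ univ.filter (fun t : F × F => t.1 * t.2 = v ^ 2 ∧ χ t.1 = χ v), f t.1 t.2)
  - (∑ t ∈ univ.filter (fun t : F × F => t.1 * t.2 = v ^ 2 ∧ χ t.1 = χ (ε * v)), f t.1 t.2)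
  + (∑ t ∈ univ.filter (fun t : F × F => t.1 * t.2 = ε * v ^ 2 ∧ χ t.1 = χ v), f t.1 t.2)
  - (∑ t ∈ univ.filter (fun t : F × F => t.1 * t.2 = ε * v ^ 2 ∧ χ t.1 = χ (ε * v)), f t.1 t.2)

theorem aux_diff {F : Type*} [Field F] [Fintype F] [DecidableEq F]
    (χ : F → ℤ) (hχ : ∀ x, χ x = quadraticChar F x) (ε v c : F) (hv : v ≠ 0) (hc : c ≠ 0)
    (hε : χ ε = -1) (f : F → F → ℂ) :
    (∑ t ∈ univ.filter (fun t : F × F => t.1 * t.2 = c ∧ χ t.1 = χ v), f t.1 t.2)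
    - (∑ t ∈ univ.filter (fun t : F × F => t.1 * t.2 = c ∧ χ t.1 = χ (ε * v)), f t.1 t.2)
    = (χ v : ℂ) * ∑ x : F, (χ x : ℂ) * f x (c / x) := by
  have hεv : χ (ε * v) = - χ v := by
    rw [hχ, map_mul, ← hχ, ← hχ, hε]; ring
  have hdich : ∀ x : F, x ≠ 0 → χ x = 1 ∨ χ x = -1 := fun x hx => by
    rw [hχ]; exact quadraticChar_dichotomy hx
  have h0 : χ 0 = 0 := by rw [hχ]; simp
  rw [hεv, Finset.sum_filter, Finset.sum_filter, ← Finset.sum_sub_distrib,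
    Fintype.sum_prod_type, Finset.mul_sum]
  refine Finset.sum_congr rfl fun x _ => ?_
  by_cases hx : x = 0
  · subst hx
    simp [h0, hc.symm]
  · rw [Finset.sum_eq_single (c / x)]
    · have : x * (c / x) = c := by field_simp
      rcases hdich x hx with h | h <;> rcases hdich v hv with h' | h' <;> simp [this, h, h']
    · intro y _ hy
      have : x * y ≠ c := by
        rintro rfl
        exact hy (by field_simp)
      simp [this]
    · simp

theorem aux_inv_s13 {F : Type*} [Field F] [Fintype F] [DecidableEq F]
    (χ : F → ℤ) (hχ : ∀ x, χ x = quadraticChar F x) (c : F) (hc : c ≠ 0) (g : F → ℂ) :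
    ∑ x : F, (χ x : ℂ) * g (c / x) = (χ c : ℂ) * ∑ x : F, (χ x : ℂ) * g x := by
  have hinv : Function.Involutive (fun x : F => c / x) := fun x => by
    by_cases hx : x = 0
    · simp [hx]
    · field_simp
  rw [Finset.mul_sum]
  refine Fintype.sum_equiv hinv.toPerm _ _ fun x => ?_
  simp only [Function.Involutive.coe_toPerm]
  rw [← mul_assoc]
  congr 1
  by_cases hx : x = 0
  · simp [hx, hχ]
  have h1 : χ c = χ (c / x) * χ x := by
    rw [hχ, hχ, hχ, ← map_mul]; congr 1; field_simp
  have h2 : χ (c / x) * χ (c / x) = 1 := by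
    rw [hχ, ← sq]; exact quadraticChar_sq_one (div_ne_zero hc hx)
  have : χ x = χ c * χ (c / x) := by
    rw [h1]; linear_combination (- χ x) * h2
  exact_mod_cast this

/-- Equation (eqn:hatvarphi01) of the paper for `φ₍₀₎`, in raw exponential-sum form:
(i) `T((x,y) ↦ ψ(y·a)) = 0` for all `a`, and
(ii) `T((x,y) ↦ ψ(x·b)) = 2·χ(v)·χ(b)·Σ_t χ(t)·ψ(t)` for all `b`. -/
theorem stmt13 (F : Type*) [Field F] [Fintype F] [DecidableEq F]
    (hq : Odd (Fintype.card F))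
    (χ : F → ℤ) (hχ0 : χ 0 = 0)
    (hχ1 : ∀ x : F, x ≠ 0 → IsSquare x → χ x = 1)
    (hχ2 : ∀ x : F, ¬ IsSquare x → χ x = -1)
    (ψ : F → ℂ) (hψadd : ∀ x y : F, ψ (x + y) = ψ x * ψ y) (hψ : ∃ x : F, ψ x ≠ 1)
    (ε : F) (hε0 : ε ≠ 0) (hε : ¬ IsSquare ε) (v : F) (hv : v ≠ 0) :
    (∀ a : F, Tsum0 χ ε v (fun _ y => ψ (y * a)) = 0) ∧
    (∀ b : F, Tsum0 χ ε v (fun x _ => ψ (x * b)) =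
      2 * (χ v : ℂ) * (χ b : ℂ) * ∑ t : F, (χ t : ℂ) * ψ t) := by
  have hχ : ∀ x, χ x = quadraticChar F x := fun x => by
    by_cases hx : x = 0
    · simp [hx, hχ0]
    by_cases hs : IsSquare x
    · rw [hχ1 x hx hs, (quadraticChar_one_iff_isSquare hx).2 hs]
    · rw [hχ2 x hs]
      have h := quadraticChar_dichotomy hx
      rcases h with h | h
      · exact absurd ((quadraticChar_one_iff_isSquare hx).1 h) hs
      · rw [h]
  have hεχ : χ ε = -1 := hχ2 ε hε
  have hv2 : v ^ 2 ≠ 0 := pow_ne_zero 2 hv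
  have hεv2 : ε * v ^ 2 ≠ 0 := mul_ne_zero hε0 hv2
  have hc1 : χ (v ^ 2) = 1 := hχ1 _ hv2 ⟨v, sq v⟩
  have hc2 : χ (ε * v ^ 2) = -1 := by
    rw [hχ, map_mul, ← hχ, ← hχ, hc1, hεχ]; rfl
  have hT : ∀ f : F → F → ℂ, Tsum0 χ ε v f =
      (χ v : ℂ) * ∑ x : F, (χ x : ℂ) * f x (v ^ 2 / x) +
      (χ v : ℂ) * ∑ x : F, (χ x : ℂ) * f x (ε * v ^ 2 / x) := fun f => by
    rw [← aux_diff χ hχ ε v _ hv hv2 hεχ, ← aux_diff χ hχ ε v _ hv hεv2 hεχ, Tsum0]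
    ring
  refine ⟨fun a => ?_, fun b => ?_⟩
  · rw [hT, aux_inv_s13 χ hχ _ hv2 (fun y => ψ (y * a)), aux_inv_s13 χ hχ _ hεv2 (fun y => ψ (y * a)),
      hc1, hc2]
    push_cast
    ring
  · rw [hT]
    have key : ∑ x : F, (χ x : ℂ) * ψ (x * b) = (χ b : ℂ) * ∑ t : F, (χ t : ℂ) * ψ t := by
      by_cases hb : b = 0
      · subst hb
        have hF : ringChar F ≠ 2 := fun h => by
          have := FiniteField.even_card_of_char_two h
          rcases hq with ⟨k, hk⟩
          omega
        have hs : ∑ x : F, (χ x : ℂ) = 0 := by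
          have := quadraticChar_sum_zero hF
          simp_rw [hχ]
          exact_mod_cast this
        simp only [mul_zero, ← Finset.sum_mul, hs, hχ0]
        simp
      · rw [Finset.mul_sum]
        refine Fintype.sum_equiv (Equiv.mulRight₀ b hb) _ _ fun x => ?_
        change (χ x : ℂ) * ψ (x * b) = (χ b : ℂ) * ((χ (x * b) : ℂ) * ψ (x * b))
        rw [← mul_assoc]
        congr 1
        have h2 : χ b * χ b = 1 := by
          rw [hχ, ← sq]; exact quadraticChar_sq_one hb
        have : χ x = χ b * χ (x * b) := by
          rw [hχ (x * b), map_mul, ← hχ, ← hχ]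
          linear_combination (- χ x) * h2
        exact_mod_cast this
    rw [key]
    ring
end
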